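/- Suppose F ∈ D(Λ), i.e. its quantile function Q satisfies de Haan's criterion. Then for each fixed x > 0, (Q(1−xs) − Q(1−s))/c(s) → −log x as s ↓ 0. -/

import Mathlib

open MeasureTheory Filter Set

noncomputable section

/-- The distribution function of a measure on `ℝ`. -/
def distFun (μ : Measure ℝ) : ℝ → ℝ := fun x => (μ (Set.Iic x)).toReal

/-- The quantile (left-continuous inverse) function of a distribution function. -/
def quantileFun (F : ℝ → ℝ) : ℝ → ℝ := fun s => sInf {x : ℝ | s ≤ F x}

/-- de Haan's criterion for the Gumbel domain of attraction, in terms of the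
quantile function `Q`. -/
def DeHaanGumbel (Q : ℝ → ℝ) : Prop :=
  ∀ x y z w : ℝ, 0 < x → 0 < y → 0 < z → 0 < w → y ≠ w →
    Tendsto (fun s : ℝ => (Q (1 - s * x) - Q (1 - s * z)) / (Q (1 - s * y) - Q (1 - s * w)))
      (nhdsWithin 0 (Set.Ioi 0))
      (nhds ((Real.log x - Real.log z) / (Real.log y - Real.log w)))

/-- The Lebesgue–Stieltjes measure `dQ` on `(0,1)` associated with the quantile function of
`F`: it coincides with the pushforward of Lebesgue measure under `F`
(for an interval `(a,b] ⊆ (0,1)` it has mass `Q(b+) - Q(a+)`). -/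
def dQ (μ : Measure ℝ) : Measure ℝ := Measure.map (distFun μ) volume

/-- `c(s,β) = s^{-β} ∫_{(1-s,1)} (1-u)^β dQ(u)`. -/
def cBeta (μ : Measure ℝ) (s β : ℝ) : ℝ :=
  s ^ (-β) * ∫ u in Set.Ioo (1 - s) 1, (1 - u) ^ β ∂(dQ μ)

/-- `c(s) = c(s,1) = s⁻¹ ∫_{(1-s,1)} (1-u) dQ(u)`. -/
def cFun (μ : Measure ℝ) (s : ℝ) : ℝ := cBeta μ s 1

/-- `σ²(s) = ∫_{(1-s,1)} ∫_{(1-s,1)} (min(u,v) - uv) dQ(u) dQ(v)`. -/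
def sigmaSq (μ : Measure ℝ) (s : ℝ) : ℝ :=
  ∫ v in Set.Ioo (1 - s) 1, (∫ u in Set.Ioo (1 - s) 1, (min u v - u * v) ∂(dQ μ)) ∂(dQ μ)

/-- A function is slowly varying at zero if `L(λ s)/L(s) → 1` as `s ↓ 0` for every `λ > 0`. -/
def SlowlyVaryingAtZero (L : ℝ → ℝ) : Prop :=
  ∀ lam : ℝ, 0 < lam →
    Tendsto (fun s : ℝ => L (lam * s) / L s) (nhdsWithin 0 (Set.Ioi 0)) (nhds 1)

/-- Condition (K) on the sequence of integers `k n`. -/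
def CondK (k : ℕ → ℕ) : Prop :=
  (∀ n : ℕ, 1 ≤ k n ∧ k n ≤ n) ∧ Tendsto k atTop atTop ∧
    Tendsto (fun n : ℕ => (k n : ℝ) / (n : ℝ)) atTop (nhds 0)

/-!
Write `U s = Q (1 - s)` and `K s = ∫_{(1-s,1)} (1-u) dQ(u)`, so that `c(s) = K s / s`. By the
criterion, `(U (s x) - U s) / a s → -log x` with `a s = U (s / e) - U s`, so it is enough to show
`K s ∼ s * a s`. On the block between `1 - s` and `1 - s l` the integrand lies between `s l` and
`s`, so the increment `K s - K (s l)` lies between `s l` and `s` times `U (s l) - U s`, which is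
about `-log l * a s`; possible atoms of `dQ` at the end points are absorbed by replacing one of the
end points with a nearby one. The same increment of `A * (s * a s)` is about
`A * (1 - l) * (s * a s)`, and `-log l / (1 - l) → 1` as `l → 1`. Hence for `l` close to `1` the
increments of `K` are smaller than those of `A * (s * a s)` if `A > 1`, larger if `A < 1`, and
summing them along `s, s l, s l ^ 2, …` compares the functions themselves.
-/

open scoped Topology

lemma tendsto_mul_const_nhdsGT_zero {l : ℝ} (hl : 0 < l) :
    Tendsto (fun s : ℝ => s * l) (𝓝[>] 0) (𝓝[>] 0) := by
  simpa only [mul_comm l] using tendsto_iff_comap.2 (comap_mulLeft_nhdsGT_zero hl).ge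

lemma tendsto_mul_pow_nhdsGT_zero {s l : ℝ} (hs : 0 < s) (hl₀ : 0 < l) (hl₁ : l < 1) :
    Tendsto (fun n : ℕ => s * l ^ n) atTop (𝓝[>] 0) := by
  refine tendsto_nhdsWithin_iff.2 ⟨?_, .of_forall fun n => mul_pos hs (pow_pos hl₀ n)⟩
  simpa using (tendsto_pow_atTop_nhds_zero_of_lt_one hl₀.le hl₁).const_mul s

lemma eventually_nhdsGT_zero_forall_mul_pow {P : ℝ → Prop} {l : ℝ} (hl₀ : 0 < l) (hl₁ : l ≤ 1)
    (hP : ∀ᶠ s in 𝓝[>] 0, P s) : ∀ᶠ s in 𝓝[>] 0, ∀ n : ℕ, P (s * l ^ n) := by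
  obtain ⟨s₀, hs₀, hsub⟩ := mem_nhdsGT_iff_exists_Ioo_subset.1 hP
  filter_upwards [Ioo_mem_nhdsGT hs₀] with s hs n
  refine hsub ⟨mul_pos hs.1 (pow_pos hl₀ n), lt_of_le_of_lt ?_ hs.2⟩
  exact mul_le_of_le_one_right hs.1.le (pow_le_one₀ hl₀.le hl₁)

lemma eventually_le_of_sub_comp_mul_le {f g : ℝ → ℝ} {l : ℝ} (hl₀ : 0 < l) (hl₁ : l < 1)
    (hf : Tendsto f (𝓝[>] 0) (𝓝 0)) (hg : Tendsto g (𝓝[>] 0) (𝓝 0))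
    (hfg : ∀ᶠ s in 𝓝[>] 0, f s - f (s * l) ≤ g s - g (s * l)) :
    ∀ᶠ s in 𝓝[>] 0, f s ≤ g s := by
  filter_upwards [eventually_nhdsGT_zero_forall_mul_pow hl₀ hl₁.le hfg, self_mem_nhdsWithin]
    with s hstep hs
  have hmono : Monotone fun n : ℕ => f (s * l ^ n) - g (s * l ^ n) := by
    refine monotone_nat_of_le_succ fun n => ?_
    rw [pow_succ, ← mul_assoc]
    linarith [hstep n]
  have hlim : Tendsto (fun n : ℕ => f (s * l ^ n) - g (s * l ^ n)) atTop (𝓝 0) := by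
    simpa [Function.comp_def] using (hf.sub hg).comp (tendsto_mul_pow_nhdsGT_zero hs hl₀ hl₁)
  have h₀ := hmono.ge_of_tendsto hlim 0
  rw [pow_zero, mul_one] at h₀
  exact sub_nonpos.1 h₀

lemma exists_neg_log_lt_mul_one_sub {A : ℝ} (hA : 1 < A) :
    ∃ r l : ℝ, 0 < r ∧ r < l ∧ l < 1 ∧ -Real.log r < A * (1 - l) := by
  obtain ⟨l, hAl, hl₁⟩ := exists_between (inv_lt_one_of_one_lt₀ hA)
  have hl₀ : 0 < l := lt_trans (by positivity) hAl
  have hlog : -Real.log l < A * (1 - l) := calc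
    -Real.log l ≤ l⁻¹ - 1 := by linarith [Real.one_sub_inv_le_log_of_pos hl₀]
    _ = l⁻¹ * (1 - l) := by field_simp
    _ < A * (1 - l) :=
      mul_lt_mul_of_pos_right (inv_lt_of_inv_lt₀ (by linarith) hAl) (sub_pos.2 hl₁)
  have hcont : ContinuousAt (fun r => -Real.log r) l := (Real.continuousAt_log hl₀.ne').neg
  obtain ⟨r, hr, hr₀, hrl⟩ := ((hcont.eventually_lt_const hlog).filter_mono nhdsWithin_le_nhds
    |>.and (Ioo_mem_nhdsLT hl₀)).exists
  exact ⟨r, l, hr₀, hrl, hl₁, hr⟩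

lemma exists_mul_one_sub_lt_mul_log_sub_log {A : ℝ} (hA : A < 1) :
    ∃ l r : ℝ, 0 < l ∧ l < r ∧ r < 1 ∧ A * (1 - l) < l * (Real.log r - Real.log l) := by
  obtain ⟨l, hAl, hl₁⟩ := exists_between (max_lt hA one_pos)
  obtain ⟨hAl, hl₀⟩ := max_lt_iff.1 hAl
  have hlog : A * (1 - l) < l * (Real.log 1 - Real.log l) := calc
    A * (1 - l) < l * (1 - l) := mul_lt_mul_of_pos_right hAl (sub_pos.2 hl₁)
    _ ≤ l * (Real.log 1 - Real.log l) := by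
      refine mul_le_mul_of_nonneg_left ?_ hl₀.le
      linarith [Real.log_le_sub_one_of_pos hl₀, Real.log_one]
  have hcont : ContinuousAt (fun r => l * (Real.log r - Real.log l)) 1 :=
    ((Real.continuousAt_log one_ne_zero).sub_const _).const_mul l
  obtain ⟨r, hr, hlr, hr₁⟩ := ((hcont.eventually_const_lt hlog).filter_mono nhdsWithin_le_nhds
    |>.and (Ioo_mem_nhdsLT hl₁)).exists
  exact ⟨l, r, hl₀, hlr, hr₁, hr⟩

/-- `U` belongs to de Haan's class `Π` at `0` with auxiliary function `a`. The sign is that of a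
function `U` which increases as its argument decreases to `0`, such as `s ↦ Q (1 - s)`. -/
structure PiVaryingAtZero (U a : ℝ → ℝ) : Prop where
  eventually_pos : ∀ᶠ s in 𝓝[>] 0, 0 < a s
  tendsto_div : ∀ x, 0 < x →
    Tendsto (fun s => (U (s * x) - U s) / a s) (𝓝[>] 0) (𝓝 (-Real.log x))

namespace PiVaryingAtZero

variable {U a K : ℝ → ℝ}

lemma tendsto_sub_div (h : PiVaryingAtZero U a) {x y : ℝ} (hx : 0 < x) (hy : 0 < y) :
    Tendsto (fun s => (U (s * x) - U (s * y)) / a s) (𝓝[>] 0) (𝓝 (Real.log y - Real.log x)) := by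
  convert (h.tendsto_div x hx).sub (h.tendsto_div y hy) using 2 <;> ring

lemma tendsto_aux_mul_div (h : PiVaryingAtZero U a) {l : ℝ} (hl : 0 < l) :
    Tendsto (fun s => a (s * l) / a s) (𝓝[>] 0) (𝓝 1) := by
  let b := Real.exp (-1)
  have hb : 0 < b := Real.exp_pos _
  have hlogb : Real.log b = -1 := Real.log_exp _
  have hnum : Tendsto (fun s => (U (s * l * b) - U (s * l)) / a s) (𝓝[>] 0) (𝓝 1) := by
    have := h.tendsto_sub_div (mul_pos hl hb) hl
    simpa [Real.log_mul hl.ne' hb.ne', hlogb, mul_assoc] using this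
  have hden : Tendsto (fun s => (U (s * l * b) - U (s * l)) / a (s * l)) (𝓝[>] 0) (𝓝 1) := by
    simpa [hlogb, Function.comp_def] using
      (h.tendsto_div b hb).comp (tendsto_mul_const_nhdsGT_zero hl)
  have hquot := hnum.div hden one_ne_zero
  rw [div_one] at hquot
  refine hquot.congr' ?_
  filter_upwards [hnum.eventually_ne one_ne_zero] with s hs
  exact div_div_div_cancel_left' _ _ (div_ne_zero_iff.1 hs).1

lemma tendsto_increment_sub_div (h : PiVaryingAtZero U a) (A c : ℝ) {x y l : ℝ}
    (hx : 0 < x) (hy : 0 < y) (hl : 0 < l) :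
    Tendsto (fun s => (c * (U (s * x) - U (s * y)) - A * (a s - l * a (s * l))) / a s) (𝓝[>] 0)
      (𝓝 (c * (Real.log y - Real.log x) - A * (1 - l))) := by
  have hlim := ((h.tendsto_sub_div hx hy).const_mul c).sub
    ((((h.tendsto_aux_mul_div hl).const_mul l).const_sub 1).const_mul A)
  rw [mul_one] at hlim
  refine hlim.congr' ?_
  filter_upwards [h.eventually_pos] with s hs
  field_simp

lemma eventually_le_mul_aux (h : PiVaryingAtZero U a) (hK : Tendsto K (𝓝[>] 0) (𝓝 0))
    (ha : Tendsto (fun s => s * a s) (𝓝[>] 0) (𝓝 0))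
    (hub : ∀ r l, 0 < r → r < l → l < 1 →
      ∀ᶠ s in 𝓝[>] 0, K s - K (s * l) ≤ s * (U (s * r) - U s))
    {A : ℝ} (hA : 1 < A) : ∀ᶠ s in 𝓝[>] 0, K s ≤ A * (s * a s) := by
  obtain ⟨r, l, hr, hrl, hl, hlt⟩ := exists_neg_log_lt_mul_one_sub hA
  have hl₀ := hr.trans hrl
  have hlim := h.tendsto_increment_sub_div A 1 hr one_pos hl₀
  simp only [one_mul, mul_one, Real.log_one, zero_sub] at hlim
  refine eventually_le_of_sub_comp_mul_le hl₀ hl hK (by simpa using ha.const_mul A) ?_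
  filter_upwards [hub r l hr hrl hl, h.eventually_pos, self_mem_nhdsWithin,
    hlim.eventually_lt_const (sub_neg.2 hlt)] with s hKs has hs hneg
  have hU := neg_of_div_neg_left hneg has.le
  calc
    K s - K (s * l) ≤ s * (U (s * r) - U s) := hKs
    _ ≤ s * (A * (a s - l * a (s * l))) := mul_le_mul_of_nonneg_left (sub_neg.1 hU).le (le_of_lt hs)
    _ = A * (s * a s) - A * (s * l * a (s * l)) := by ring

lemma eventually_mul_aux_le (h : PiVaryingAtZero U a) (hK : Tendsto K (𝓝[>] 0) (𝓝 0))
    (ha : Tendsto (fun s => s * a s) (𝓝[>] 0) (𝓝 0))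
    (hlb : ∀ l r, 0 < l → l < r → r < 1 →
      ∀ᶠ s in 𝓝[>] 0, s * l * (U (s * l) - U (s * r)) ≤ K s - K (s * l))
    {A : ℝ} (hA : A < 1) : ∀ᶠ s in 𝓝[>] 0, A * (s * a s) ≤ K s := by
  obtain ⟨l, r, hl, hlr, hr, hlt⟩ := exists_mul_one_sub_lt_mul_log_sub_log hA
  have hlim := h.tendsto_increment_sub_div A l hl (hl.trans hlr) hl
  refine eventually_le_of_sub_comp_mul_le hl (hlr.trans hr) (by simpa using ha.const_mul A) hK ?_
  filter_upwards [hlb l r hl hlr hr, h.eventually_pos, self_mem_nhdsWithin,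
    hlim.eventually_const_lt (sub_pos.2 hlt)] with s hKs has hs hpos
  have hU := (div_pos_iff_of_pos_right has).1 hpos
  calc
    A * (s * a s) - A * (s * l * a (s * l)) = s * (A * (a s - l * a (s * l))) := by ring
    _ ≤ s * (l * (U (s * l) - U (s * r))) :=
      mul_le_mul_of_nonneg_left (sub_pos.1 hU).le (le_of_lt hs)
    _ = s * l * (U (s * l) - U (s * r)) := by ring
    _ ≤ K s - K (s * l) := hKs

lemma tendsto_mul_aux (h : PiVaryingAtZero U a) (hK : Tendsto K (𝓝[>] 0) (𝓝 0)) {l r : ℝ}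
    (hl : 0 < l) (hlr : l < r)
    (hlb : ∀ᶠ s in 𝓝[>] 0, s * l * (U (s * l) - U (s * r)) ≤ K s - K (s * l)) :
    Tendsto (fun s => s * a s) (𝓝[>] 0) (𝓝 0) := by
  obtain ⟨δ, hδ, hδlog⟩ := exists_between (sub_pos.2 (Real.log_lt_log hl hlr))
  have hbound : Tendsto (fun s => (K s - K (s * l)) / (l * δ)) (𝓝[>] 0) (𝓝 0) := by
    simpa using (hK.sub (hK.comp (tendsto_mul_const_nhdsGT_zero hl))).div_const (l * δ)
  refine squeeze_zero' ?_ ?_ hbound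
  · filter_upwards [h.eventually_pos, self_mem_nhdsWithin] with s has hs using (mul_pos hs has).le
  · filter_upwards [hlb, h.eventually_pos, self_mem_nhdsWithin,
      (h.tendsto_sub_div hl (hl.trans hlr)).eventually_const_lt hδlog] with s hKs has hs hδs
    rw [mem_Ioi] at hs
    rw [le_div_iff₀ (by positivity)]
    calc
      s * a s * (l * δ) = s * l * (δ * a s) := by ring
      _ ≤ s * l * (U (s * l) - U (s * r)) :=
        mul_le_mul_of_nonneg_left ((lt_div_iff₀ has).1 hδs).le (by positivity)
      _ ≤ K s - K (s * l) := hKs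

theorem tendsto_div_mul_aux (h : PiVaryingAtZero U a) (hK : Tendsto K (𝓝[>] 0) (𝓝 0))
    (hlb : ∀ l r, 0 < l → l < r → r < 1 →
      ∀ᶠ s in 𝓝[>] 0, s * l * (U (s * l) - U (s * r)) ≤ K s - K (s * l))
    (hub : ∀ r l, 0 < r → r < l → l < 1 →
      ∀ᶠ s in 𝓝[>] 0, K s - K (s * l) ≤ s * (U (s * r) - U s)) :
    Tendsto (fun s => K s / (s * a s)) (𝓝[>] 0) (𝓝 1) := by
  have ha : Tendsto (fun s => s * a s) (𝓝[>] 0) (𝓝 0) :=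
    h.tendsto_mul_aux hK (l := 1 / 4) (r := 1 / 2) (by norm_num) (by norm_num)
      (hlb _ _ (by norm_num) (by norm_num) (by norm_num))
  have hpos : ∀ᶠ s in 𝓝[>] 0, 0 < s * a s := by
    filter_upwards [h.eventually_pos, self_mem_nhdsWithin] with s has hs using mul_pos hs has
  refine tendsto_order.2 ⟨fun A hA => ?_, fun A hA => ?_⟩
  · obtain ⟨B, hAB, hB⟩ := exists_between hA
    filter_upwards [h.eventually_mul_aux_le hK ha hlb hB, hpos] with s hs hspos
    exact hAB.trans_le ((le_div_iff₀ hspos).2 hs)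
  · obtain ⟨B, hB, hBA⟩ := exists_between hA
    filter_upwards [h.eventually_le_mul_aux hK ha hub hB, hpos] with s hs hspos
    exact ((div_le_iff₀ hspos).2 hs).trans_lt hBA

lemma tendsto_div_of_tendsto_div_aux (h : PiVaryingAtZero U a) {b : ℝ → ℝ}
    (hb : Tendsto (fun s => b s / a s) (𝓝[>] 0) (𝓝 1)) {x : ℝ} (hx : 0 < x) :
    Tendsto (fun s => (U (s * x) - U s) / b s) (𝓝[>] 0) (𝓝 (-Real.log x)) := by
  have hquot := (h.tendsto_div x hx).div hb one_ne_zero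
  rw [div_one] at hquot
  refine hquot.congr' ?_
  filter_upwards [h.eventually_pos] with s has
  exact div_div_div_cancel_right₀ has.ne' _ _

end PiVaryingAtZero

lemma DeHaanGumbel.piVaryingAtZero {Q : ℝ → ℝ} (hQ : DeHaanGumbel Q)
    (hmono : MonotoneOn Q (Ioo 0 1)) :
    PiVaryingAtZero (fun s => Q (1 - s)) (fun s => Q (1 - s * Real.exp (-1)) - Q (1 - s)) := by
  set b := Real.exp (-1) with hb
  have hb₀ : 0 < b := Real.exp_pos _
  have hb₁ : b < 1 := by simp [hb]
  refine ⟨?_, fun x hx => ?_⟩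
  · have hself := hQ b b 1 1 hb₀ hb₀ one_pos one_pos hb₁.ne
    rw [div_self (sub_ne_zero.2 (Real.log_injOn_pos.ne hb₀ (mem_Ioi.2 one_pos) hb₁.ne))] at hself
    filter_upwards [hself.eventually_ne one_ne_zero, Ioo_mem_nhdsGT one_pos] with s hne hs
    have hsb : s * b < s := mul_lt_of_lt_one_right hs.1 hb₁
    have hsb₀ : 0 < s * b := mul_pos hs.1 hb₀
    have hle := hmono (a := 1 - s) (b := 1 - s * b) ⟨by linarith [hs.2], by linarith [hs.1]⟩
      ⟨by linarith [hs.2], by linarith⟩ (by linarith)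
    rw [mul_one] at hne
    exact (sub_nonneg.2 hle).lt_of_ne' (div_ne_zero_iff.1 hne).2
  · simpa [hb, div_neg] using hQ x b 1 1 hx hb₀ one_pos one_pos hb₁.ne

section TailIntegral

lemma tendsto_setIntegral_Ioo_nhdsLT {E : Type*} [NormedAddCommGroup E] [NormedSpace ℝ E]
    {ν : Measure ℝ} {f : ℝ → E} {a b : ℝ} (hab : a < b) (hf : IntegrableOn f (Ioo a b) ν) :
    Tendsto (fun x => ∫ u in Ioo x b, f u ∂ν) (𝓝[<] b) (𝓝 0) := by
  have hlim : Tendsto (fun x => ∫ u in Ioo a b, (Ioo x b).indicator f u ∂ν) (𝓝[<] b)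
      (𝓝 (∫ _ in Ioo a b, (0 : E) ∂ν)) := by
    refine tendsto_integral_filter_of_dominated_convergence (fun u => ‖f u‖)
      (.of_forall fun x => hf.aestronglyMeasurable.indicator measurableSet_Ioo)
      (.of_forall fun x => .of_forall fun u => norm_indicator_le_norm_self f u) hf.norm ?_
    refine (ae_restrict_iff' measurableSet_Ioo).2 (.of_forall fun u hu => ?_)
    refine tendsto_const_nhds.congr' ?_
    filter_upwards [Ioo_mem_nhdsLT hu.2] with x hx
    exact (indicator_of_notMem (fun h => hx.1.not_gt h.1) f).symm
  rw [integral_zero] at hlim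
  refine hlim.congr' ?_
  filter_upwards [Ioo_mem_nhdsLT hab] with x hx
  rw [setIntegral_indicator measurableSet_Ioo,
    inter_eq_self_of_subset_right (Ioo_subset_Ioo_left hx.1.le)]

/-- The numerator `∫_{(1-s,1)} (1-u) dν(u)` of `c(s)`, for an arbitrary measure `ν`. -/
def tailIntegral (ν : Measure ℝ) (s : ℝ) : ℝ := ∫ u in Ioo (1 - s) 1, (1 - u) ∂ν

variable {ν : Measure ℝ} {s t : ℝ}

lemma cFun_eq_tailIntegral_div (μ : Measure ℝ) (s : ℝ) : cFun μ s = tailIntegral (dQ μ) s / s := by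
  simp [cFun, cBeta, tailIntegral, Real.rpow_neg_one, div_eq_inv_mul]

lemma tendsto_tailIntegral (hs : 0 < s) (hint : IntegrableOn (fun u => 1 - u) (Ioo (1 - s) 1) ν) :
    Tendsto (tailIntegral ν) (𝓝[>] 0) (𝓝 0) := by
  have hsub : Tendsto (fun s : ℝ => 1 - s) (𝓝[>] 0) (𝓝[<] 1) := by
    refine tendsto_nhdsWithin_iff.2 ⟨?_, ?_⟩
    · exact (Continuous.tendsto' (by fun_prop) 0 1 (sub_zero 1)).mono_left nhdsWithin_le_nhds
    · filter_upwards [self_mem_nhdsWithin] with s (hs : 0 < s) using sub_lt_self 1 hs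
  exact (tendsto_setIntegral_Ioo_nhdsLT (sub_lt_self 1 hs) hint).comp hsub

lemma tailIntegral_sub_tailIntegral (ht : 0 < t) (hts : t ≤ s)
    (hint : IntegrableOn (fun u => 1 - u) (Ioo (1 - s) 1) ν) :
    tailIntegral ν s - tailIntegral ν t = ∫ u in Ioc (1 - s) (1 - t), (1 - u) ∂ν := by
  have hunion : Ioc (1 - s) (1 - t) ∪ Ioo (1 - t) 1 = Ioo (1 - s) 1 :=
    Ioc_union_Ioo_eq_Ioo (by linarith) (by linarith)
  have hdisj : Disjoint (Ioc (1 - s) (1 - t)) (Ioo (1 - t) 1) :=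
    disjoint_left.2 fun u hu hu' => hu.2.not_gt hu'.1
  rw [← hunion] at hint
  rw [tailIntegral, tailIntegral, ← hunion, setIntegral_union hdisj measurableSet_Ioo
    hint.left_of_union hint.right_of_union, add_sub_cancel_right]

lemma tailIntegral_sub_tailIntegral_le (ht : 0 < t) (hts : t ≤ s)
    (hint : IntegrableOn (fun u => 1 - u) (Ioo (1 - s) 1) ν) (hν : ν (Ioc (1 - s) (1 - t)) ≠ ⊤) :
    tailIntegral ν s - tailIntegral ν t ≤ s * ν.real (Ioc (1 - s) (1 - t)) := by
  have hle := setIntegral_mono_on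
    (hint.mono_set fun u hu => ⟨hu.1, hu.2.trans_lt (sub_lt_self 1 ht)⟩)
    (integrableOn_const hν (C := s)) measurableSet_Ioc fun u hu => by linarith [hu.1]
  rw [tailIntegral_sub_tailIntegral ht hts hint]
  rwa [setIntegral_const, smul_eq_mul, mul_comm] at hle

lemma le_tailIntegral_sub_tailIntegral (ht : 0 < t) (hts : t ≤ s)
    (hint : IntegrableOn (fun u => 1 - u) (Ioo (1 - s) 1) ν) (hν : ν (Ioc (1 - s) (1 - t)) ≠ ⊤) :
    t * ν.real (Ioc (1 - s) (1 - t)) ≤ tailIntegral ν s - tailIntegral ν t := by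
  rw [tailIntegral_sub_tailIntegral ht hts hint]
  exact setIntegral_ge_of_const_le_real measurableSet_Ioc hν (fun u hu => by linarith [hu.2])
    (hint.mono_set fun u hu => ⟨hu.1, hu.2.trans_lt (sub_lt_self 1 ht)⟩)

end TailIntegral

section Quantile

lemma quantileFun_le_iff (F : StieltjesFunction ℝ) {t : ℝ} (hlt : ∃ x, F x < t) (hge : ∃ x, t ≤ F x)
    (x : ℝ) : quantileFun F t ≤ x ↔ t ≤ F x := by
  have hbdd : BddBelow {x | t ≤ F x} := by
    obtain ⟨a, ha⟩ := hlt
    exact ⟨a, fun y hy => le_of_not_ge fun hya => (ha.trans_le hy).not_ge (F.mono hya)⟩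
  refine ⟨fun hx => ?_, fun hx => csInf_le hbdd hx⟩
  have hright : Tendsto F (𝓝[>] x) (𝓝 (F x)) :=
    (F.right_continuous x).tendsto.mono_left (nhdsWithin_mono _ Ioi_subset_Ici_self)
  refine ge_of_tendsto hright ?_
  filter_upwards [self_mem_nhdsWithin] with y hxy
  obtain ⟨z, hz, hzy⟩ := exists_lt_of_csInf_lt hge (hx.trans_lt hxy)
  exact le_trans hz (F.mono hzy.le)

variable (μ : Measure ℝ) [IsProbabilityMeasure μ] {a b t : ℝ}

lemma distFun_eq_cdf : distFun μ = ProbabilityTheory.cdf μ :=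
  funext fun x => (ProbabilityTheory.cdf_eq_real μ x).symm

lemma quantileFun_distFun_le_iff (ht : t ∈ Ioo 0 1) (x : ℝ) :
    quantileFun (distFun μ) t ≤ x ↔ t ≤ distFun μ x := by
  rw [distFun_eq_cdf]
  exact quantileFun_le_iff _
    ((ProbabilityTheory.tendsto_cdf_atBot μ).eventually_lt_const ht.1).exists
    ((ProbabilityTheory.tendsto_cdf_atTop μ).eventually_const_le ht.2).exists x

lemma monotoneOn_quantileFun_distFun : MonotoneOn (quantileFun (distFun μ)) (Ioo 0 1) :=
  fun _ ha _ hb hab => (quantileFun_distFun_le_iff μ ha _).2 <|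
    hab.trans ((quantileFun_distFun_le_iff μ hb _).1 le_rfl)

lemma dQ_Ico (ha : a ∈ Ioo 0 1) (hb : b ∈ Ioo 0 1) :
    dQ μ (Ico a b) = ENNReal.ofReal (quantileFun (distFun μ) b - quantileFun (distFun μ) a) := by
  have hpre : distFun μ ⁻¹' Ico a b =
      Ico (quantileFun (distFun μ) a) (quantileFun (distFun μ) b) := by
    ext x
    simp only [mem_preimage, mem_Ico, quantileFun_distFun_le_iff μ ha, ← not_le,
      quantileFun_distFun_le_iff μ hb]
  have hmeas : Measurable (distFun μ) := by
    rw [distFun_eq_cdf]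
    exact (ProbabilityTheory.monotone_cdf μ).measurable
  rw [dQ, Measure.map_apply hmeas measurableSet_Ico, hpre, Real.volume_Ico]

lemma dQ_real_Ico (ha : a ∈ Ioo 0 1) (hb : b ∈ Ioo 0 1) (hab : a ≤ b) :
    (dQ μ).real (Ico a b) = quantileFun (distFun μ) b - quantileFun (distFun μ) a := by
  rw [measureReal_def, dQ_Ico μ ha hb,
    ENNReal.toReal_ofReal (sub_nonneg.2 (monotoneOn_quantileFun_distFun μ ha hb hab))]

lemma dQ_Ico_ne_top (ha : a ∈ Ioo 0 1) (hb : b ∈ Ioo 0 1) : dQ μ (Ico a b) ≠ ⊤ := by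
  rw [dQ_Ico μ ha hb]
  exact ENNReal.ofReal_ne_top

end Quantile

section QuantileTail

variable (μ : Measure ℝ) [IsProbabilityMeasure μ] {a : ℝ → ℝ} {r s t : ℝ}

lemma tailIntegral_dQ_sub_le (hr : 0 < r) (hrt : r < t) (hts : t ≤ s) (hs : s < 1)
    (hint : IntegrableOn (fun u => 1 - u) (Ioo (1 - s) 1) (dQ μ)) :
    tailIntegral (dQ μ) s - tailIntegral (dQ μ) t ≤
      s * (quantileFun (distFun μ) (1 - r) - quantileFun (distFun μ) (1 - s)) := by
  have hs₁ : 1 - s ∈ Ioo (0 : ℝ) 1 := ⟨by linarith, by linarith⟩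
  have hr₁ : 1 - r ∈ Ioo (0 : ℝ) 1 := ⟨by linarith, by linarith⟩
  have hsub : Ioc (1 - s) (1 - t) ⊆ Ico (1 - s) (1 - r) :=
    fun u hu => ⟨hu.1.le, by linarith [hu.2]⟩
  have hfin := dQ_Ico_ne_top μ hs₁ hr₁
  calc
    tailIntegral (dQ μ) s - tailIntegral (dQ μ) t ≤ s * (dQ μ).real (Ioc (1 - s) (1 - t)) :=
      tailIntegral_sub_tailIntegral_le (hr.trans hrt) hts hint (measure_ne_top_of_subset hsub hfin)
    _ ≤ s * (dQ μ).real (Ico (1 - s) (1 - r)) :=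
      mul_le_mul_of_nonneg_left (measureReal_mono hsub hfin) (by linarith)
    _ = s * (quantileFun (distFun μ) (1 - r) - quantileFun (distFun μ) (1 - s)) := by
      rw [dQ_real_Ico μ hs₁ hr₁ (by linarith)]

lemma le_tailIntegral_dQ_sub (ht : 0 < t) (htr : t ≤ r) (hrs : r < s) (hs : s < 1)
    (hint : IntegrableOn (fun u => 1 - u) (Ioo (1 - s) 1) (dQ μ)) :
    t * (quantileFun (distFun μ) (1 - t) - quantileFun (distFun μ) (1 - r)) ≤
      tailIntegral (dQ μ) s - tailIntegral (dQ μ) t := by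
  have hsub : Ico (1 - r) (1 - t) ⊆ Ioc (1 - s) (1 - t) :=
    fun u hu => ⟨by linarith [hu.1], hu.2.le⟩
  have hfin : dQ μ (Ioc (1 - s) (1 - t)) ≠ ⊤ := by
    have hsup : Ioc (1 - s) (1 - t) ⊆ Ico (1 - s) (1 - t / 2) :=
      fun u hu => ⟨hu.1.le, by linarith [hu.2]⟩
    exact measure_ne_top_of_subset hsup
      (dQ_Ico_ne_top μ ⟨by linarith, by linarith⟩ ⟨by linarith, by linarith⟩)
  calc
    t * (quantileFun (distFun μ) (1 - t) - quantileFun (distFun μ) (1 - r)) =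
        t * (dQ μ).real (Ico (1 - r) (1 - t)) := by
      rw [dQ_real_Ico μ ⟨by linarith, by linarith⟩ ⟨by linarith, by linarith⟩ (by linarith)]
    _ ≤ t * (dQ μ).real (Ioc (1 - s) (1 - t)) :=
      mul_le_mul_of_nonneg_left (measureReal_mono hsub hfin) ht.le
    _ ≤ tailIntegral (dQ μ) s - tailIntegral (dQ μ) t :=
      le_tailIntegral_sub_tailIntegral ht (htr.trans hrs.le) hint hfin

theorem tendsto_cFun_div_aux
    (h : PiVaryingAtZero (fun s => quantileFun (distFun μ) (1 - s)) a)
    (hint : ∀ᶠ s in 𝓝[>] 0, IntegrableOn (fun u => 1 - u) (Ioo (1 - s) 1) (dQ μ)) :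
    Tendsto (fun s => cFun μ s / a s) (𝓝[>] 0) (𝓝 1) := by
  have hK : Tendsto (tailIntegral (dQ μ)) (𝓝[>] 0) (𝓝 0) := by
    obtain ⟨s, hs, hs₀⟩ := (hint.and self_mem_nhdsWithin).exists
    exact tendsto_tailIntegral hs₀ hs
  have hlb : ∀ l r, 0 < l → l < r → r < 1 → ∀ᶠ s in 𝓝[>] 0,
      s * l * (quantileFun (distFun μ) (1 - s * l) - quantileFun (distFun μ) (1 - s * r)) ≤
        tailIntegral (dQ μ) s - tailIntegral (dQ μ) (s * l) := fun l r hl hlr hr => by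
    filter_upwards [hint, Ioo_mem_nhdsGT one_pos] with s hs ⟨hs₀, hs₁⟩
    exact le_tailIntegral_dQ_sub μ (mul_pos hs₀ hl) (mul_le_mul_of_nonneg_left hlr.le hs₀.le)
      (mul_lt_of_lt_one_right hs₀ hr) hs₁ hs
  have hub : ∀ r l, 0 < r → r < l → l < 1 → ∀ᶠ s in 𝓝[>] 0,
      tailIntegral (dQ μ) s - tailIntegral (dQ μ) (s * l) ≤
        s * (quantileFun (distFun μ) (1 - s * r) - quantileFun (distFun μ) (1 - s)) :=
    fun r l hr hrl hl => by
    filter_upwards [hint, Ioo_mem_nhdsGT one_pos] with s hs ⟨hs₀, hs₁⟩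
    exact tailIntegral_dQ_sub_le μ (mul_pos hs₀ hr) (mul_lt_mul_of_pos_left hrl hs₀)
      (mul_le_of_le_one_right hs₀.le hl.le) hs₁ hs
  simpa only [cFun_eq_tailIntegral_div, div_div] using h.tendsto_div_mul_aux hK hlb hub

end QuantileTail

/-- **Lemma 4.** If `F ∈ D(Λ)` then for each fixed `x > 0`,
`(Q(1-xs) - Q(1-s))/c(s) → -log x` as `s ↓ 0`. -/
theorem quantile_diff_div_c_tendsto
    (μ : Measure ℝ) [IsProbabilityMeasure μ] (F Q : ℝ → ℝ)
    (hF : F = distFun μ) (hQ : Q = quantileFun F)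
    (hD : DeHaanGumbel Q)
    (hc : ∀ᶠ s in nhdsWithin (0:ℝ) (Set.Ioi 0),
      IntegrableOn (fun u : ℝ => 1 - u) (Set.Ioo (1 - s) 1) (dQ μ) ∧ 0 < cFun μ s)
    (x : ℝ) (hx : 0 < x) :
    Tendsto (fun s : ℝ => (Q (1 - x * s) - Q (1 - s)) / cFun μ s)
      (nhdsWithin 0 (Set.Ioi 0)) (nhds (-Real.log x)) := by
  subst hF hQ
  have hpi := hD.piVaryingAtZero (monotoneOn_quantileFun_distFun μ)
  have hcdiv := tendsto_cFun_div_aux μ hpi (hc.mono fun _ hs => hs.1)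
  simpa only [mul_comm x] using hpi.tendsto_div_of_tendsto_div_aux hcdiv hx
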